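/- Let N, M ≥ 1, let A be a real N×N matrix with spectral expansion λ(A) ≤ α where 0 ≤ α < 1, and let Ã be an NM×NM orthogonal matrix satisfying P Ã P = A ⊗ ((1/M)J_M), where P = I_N ⊗ (1/M)J_M. Let y ∈ ℝ^{NM} be orthogonal to the all-ones vector 𝟙_{NM} and satisfy ‖y^∥‖ ≥ α·‖y‖. Then ‖(Ãy)^∥‖ ≤ α·‖y^∥‖ + √(1−α²)·‖y^⊥‖. -/

import Mathlib

/-!
Write `u = y^∥`, `w = y^⊥`, `p = ‖u‖`, `q = ‖w‖`, `s = √(1 - α²)`. The hypothesis on `y^∥` says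
exactly that `α q ≤ s p`, so `t = α q / (s p)` lies in `[0, 1]` (take `t = 0` if `p = 0`). Split `y = (w + t u) + (1 - t) u`
and apply `P Ã`. The first summand is bounded by contractivity and Pythagoras
(`euclNorm_blockPar_le`, `euclNorm_sq_perp_add_smul_par`), giving
`‖w + t u‖ = √(q² + t² p²) = q / s`. The second is bounded by the expansion of `A`
(`euclNorm_blockPar_mulVec_blockPar_le`), giving `(1 - t) α p`. The total is
`q / s + α p - α² q / s = α p + s q`.
-/

open Matrix Kronecker

/-- Euclidean norm of a real vector. -/
noncomputable def euclNorm {n : Type*} [Fintype n] (x : n → ℝ) : ℝ :=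
  Real.sqrt (∑ i, x i ^ 2)

/-- A real square matrix is doubly stochastic if its entries are nonnegative and
each row sum and each column sum equals 1. -/
def IsDoublyStochastic {n : Type*} [Fintype n] (A : Matrix n n ℝ) : Prop :=
  (∀ i j, 0 ≤ A i j) ∧ (∀ i, ∑ j, A i j = 1) ∧ (∀ j, ∑ i, A i j = 1)

/-- A permutation matrix. -/
def IsPermMatrix {n : Type*} [DecidableEq n] (A : Matrix n n ℝ) : Prop :=
  ∃ σ : Equiv.Perm n, ∀ p q, A p q = if p = σ q then 1 else 0

/-- The function f(α,β₁,β₂) bounding the spectral expansion of the generalized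
zig-zag product. -/
noncomputable def fZZ (α β₁ β₂ : ℝ) : ℝ :=
  (1 / 2) * (Real.sqrt (α ^ 2 * (1 - β₁ ^ 2) * (1 - β₂ ^ 2) + (β₁ + β₂) ^ 2)
           + Real.sqrt (α ^ 2 * (1 - β₁ ^ 2) * (1 - β₂ ^ 2) + (β₁ - β₂) ^ 2))

/-- The M×M all-ones matrix J_M. -/
def onesMat (M : ℕ) : Matrix (Fin M) (Fin M) ℝ := Matrix.of fun _ _ => 1

/-- P = I_N ⊗ (1/M)·J_M, the orthogonal projection onto blockwise-constant vectors. -/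
noncomputable def projP (N M : ℕ) : Matrix (Fin N × Fin M) (Fin N × Fin M) ℝ :=
  (1 : Matrix (Fin N) (Fin N) ℝ) ⊗ₖ ((M : ℝ)⁻¹ • onesMat M)

/-- The blockwise-constant part x^∥ of a vector indexed by [N]×[M]. -/
noncomputable def blockPar {N M : ℕ} (x : Fin N × Fin M → ℝ) : Fin N × Fin M → ℝ :=
  fun p => (∑ j, x (p.1, j)) / M

/-- The part x^⊥ = x − x^∥ of a vector indexed by [N]×[M]. -/
noncomputable def blockPerp {N M : ℕ} (x : Fin N × Fin M → ℝ) : Fin N × Fin M → ℝ :=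
  x - blockPar x

lemma euclNorm_eq_norm {n : Type*} [Fintype n] (x : n → ℝ) :
    euclNorm x = ‖WithLp.toLp 2 x‖ := by
  simp [euclNorm, EuclideanSpace.norm_eq]

lemma euclNorm_nonneg {n : Type*} [Fintype n] (x : n → ℝ) : 0 ≤ euclNorm x :=
  Real.sqrt_nonneg _

lemma euclNorm_sq {n : Type*} [Fintype n] (x : n → ℝ) : euclNorm x ^ 2 = ∑ i, x i ^ 2 :=
  Real.sq_sqrt (Finset.sum_nonneg fun _ _ => sq_nonneg _)

lemma euclNorm_add_le {n : Type*} [Fintype n] (x y : n → ℝ) :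
    euclNorm (x + y) ≤ euclNorm x + euclNorm y := by
  simpa only [euclNorm_eq_norm, WithLp.toLp_add] using norm_add_le _ _

lemma euclNorm_smul {n : Type*} [Fintype n] (c : ℝ) (hc : 0 ≤ c) (x : n → ℝ) :
    euclNorm (c • x) = c * euclNorm x := by
  rw [euclNorm_eq_norm, euclNorm_eq_norm, WithLp.toLp_smul, norm_smul, Real.norm_of_nonneg hc]

lemma euclNorm_mulVec_of_orthogonal {n : Type*} [Fintype n] [DecidableEq n]
    (Q : Matrix n n ℝ) (hQ : Q.transpose * Q = 1) (x : n → ℝ) :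
    euclNorm (Q.mulVec x) = euclNorm x := by
  have h : Q.mulVec x ⬝ᵥ Q.mulVec x = x ⬝ᵥ x := by
    rw [Matrix.dotProduct_mulVec, Matrix.vecMul_mulVec, hQ, Matrix.vecMul_one]
  simp only [dotProduct, ← sq] at h
  rw [euclNorm, euclNorm, h]

lemma projP_mulVec {N M : ℕ} (x : Fin N × Fin M → ℝ) :
    (projP N M).mulVec x = blockPar x := by
  funext ⟨i, k⟩
  simp [projP, onesMat, blockPar, Matrix.mulVec, dotProduct, Fintype.sum_prod_type,
    Matrix.one_apply, div_eq_inv_mul]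
  rw [Finset.sum_comm]
  simp [Finset.mul_sum]

lemma sum_perp_mul_par {N M : ℕ} (hM : 1 ≤ M) (x : Fin N × Fin M → ℝ) :
    ∑ p, blockPerp x p * blockPar x p = 0 := by
  have hM' : (M : ℝ) ≠ 0 := by positivity
  rw [Fintype.sum_prod_type]
  refine Finset.sum_eq_zero fun i _ => ?_
  simp only [blockPerp, blockPar, Pi.sub_apply]
  rw [← Finset.sum_mul, Finset.sum_sub_distrib]
  simp [mul_div_cancel₀ _ hM']

/-- Pythagoras for the orthogonal decomposition `x = x^∥ + x^⊥`. -/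
lemma euclNorm_sq_perp_add_smul_par {N M : ℕ} (hM : 1 ≤ M) (x : Fin N × Fin M → ℝ) (t : ℝ) :
    euclNorm (blockPerp x + t • blockPar x) ^ 2
      = euclNorm (blockPerp x) ^ 2 + t ^ 2 * euclNorm (blockPar x) ^ 2 := by
  have h := sum_perp_mul_par hM x
  simp only [euclNorm_sq, Pi.add_apply, Pi.smul_apply, smul_eq_mul]
  calc _ = ∑ p, (blockPerp x p ^ 2 + t ^ 2 * blockPar x p ^ 2
          + 2 * t * (blockPerp x p * blockPar x p)) :=
        Finset.sum_congr rfl fun p _ => by ring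
    _ = _ := by
        rw [Finset.sum_add_distrib, Finset.sum_add_distrib, ← Finset.mul_sum, ← Finset.mul_sum, h]
        ring

lemma euclNorm_sq_eq_perp_add_par {N M : ℕ} (hM : 1 ≤ M) (x : Fin N × Fin M → ℝ) :
    euclNorm x ^ 2 = euclNorm (blockPerp x) ^ 2 + euclNorm (blockPar x) ^ 2 := by
  have h := euclNorm_sq_perp_add_smul_par hM x 1
  simpa [blockPerp] using h

lemma euclNorm_blockPar_le {N M : ℕ} (hM : 1 ≤ M) (x : Fin N × Fin M → ℝ) :
    euclNorm (blockPar x) ≤ euclNorm x := by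
  refine le_of_sq_le_sq ?_ (euclNorm_nonneg _)
  rw [euclNorm_sq_eq_perp_add_par hM x]
  nlinarith [sq_nonneg (euclNorm (blockPerp x))]

/-- The norm of the blockwise-constant extension of `g` is `√M · ‖g‖`. -/
lemma euclNorm_comp_fst {N M : ℕ} (g : Fin N → ℝ) :
    euclNorm (fun p : Fin N × Fin M => g p.1) = Real.sqrt M * euclNorm g := by
  rw [euclNorm, euclNorm, ← Real.sqrt_mul (Nat.cast_nonneg M)]
  simp [Fintype.sum_prod_type, Finset.mul_sum]

/-- On blockwise-constant vectors orthogonal to the all-ones vector, `P Ã` acts as `A` does on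
the vector of block averages, so it contracts by `α`. -/
lemma euclNorm_blockPar_mulVec_blockPar_le {N M : ℕ} (α : ℝ)
    (A : Matrix (Fin N) (Fin N) ℝ)
    (hAα : ∀ v : Fin N → ℝ, ∑ i, v i = 0 → euclNorm (A.mulVec v) ≤ α * euclNorm v)
    (Atil : Matrix (Fin N × Fin M) (Fin N × Fin M) ℝ)
    (hrot : projP N M * Atil * projP N M = A ⊗ₖ ((M : ℝ)⁻¹ • onesMat M))
    (y : Fin N × Fin M → ℝ) (hy : ∑ p, y p = 0) :
    euclNorm (blockPar (Atil.mulVec (blockPar y))) ≤ α * euclNorm (blockPar y) := by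
  set v : Fin N → ℝ := fun i => (∑ j, y (i, j)) / M with hv
  have hv0 : ∑ i, v i = 0 := by
    rw [hv, ← Finset.sum_div, ← Fintype.sum_prod_type, hy, zero_div]
  have h1 : blockPar (Atil.mulVec (blockPar y))
      = fun p : Fin N × Fin M => A.mulVec v p.1 := by
    rw [← projP_mulVec, ← projP_mulVec, Matrix.mulVec_mulVec, Matrix.mulVec_mulVec,
      hrot]
    funext ⟨i, k⟩
    simp only [hv, onesMat, Matrix.mulVec, dotProduct, Fintype.sum_prod_type,
      Matrix.kroneckerMap_apply, Matrix.smul_apply, Matrix.of_apply, smul_eq_mul, mul_one]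
    refine Finset.sum_congr rfl fun j _ => ?_
    rw [← Finset.mul_sum]
    ring
  have h2 : blockPar y = fun p : Fin N × Fin M => v p.1 := rfl
  rw [h1, h2, euclNorm_comp_fst, euclNorm_comp_fst]
  calc _ ≤ Real.sqrt M * (α * euclNorm v) :=
        mul_le_mul_of_nonneg_left (hAα v hv0) (Real.sqrt_nonneg _)
    _ = _ := by ring

theorem rotmap_case1_bound
    (N M : ℕ) (hN : 1 ≤ N) (hM : 1 ≤ M) (α : ℝ) (hα0 : 0 ≤ α) (hα1 : α < 1)
    (A : Matrix (Fin N) (Fin N) ℝ)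
    (hAα : ∀ v : Fin N → ℝ, ∑ i, v i = 0 → euclNorm (A.mulVec v) ≤ α * euclNorm v)
    (Atil : Matrix (Fin N × Fin M) (Fin N × Fin M) ℝ)
    (horth : Atil.transpose * Atil = 1)
    (hrot : projP N M * Atil * projP N M = A ⊗ₖ ((M : ℝ)⁻¹ • onesMat M))
    (y : Fin N × Fin M → ℝ) (hy : ∑ p, y p = 0)
    (hpar : α * euclNorm y ≤ euclNorm (blockPar y)) :
    euclNorm (blockPar (Atil.mulVec y))
      ≤ α * euclNorm (blockPar y) + Real.sqrt (1 - α ^ 2) * euclNorm (blockPerp y) := by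
  have hu := euclNorm_blockPar_mulVec_blockPar_le α A hAα Atil hrot y hy
  have hpyth := euclNorm_sq_eq_perp_add_par hM y
  have hsplit : ∀ t : ℝ, t ≤ 1 → euclNorm (blockPar (Atil.mulVec y))
      ≤ euclNorm (blockPerp y + t • blockPar y) + (1 - t) * (α * euclNorm (blockPar y)) := by
    intro t ht1
    have hdecomp : blockPar (Atil.mulVec y)
        = blockPar (Atil.mulVec (blockPerp y + t • blockPar y))
          + (1 - t) • blockPar (Atil.mulVec (blockPar y)) := by
      have hy' : y = (blockPerp y + t • blockPar y) + (1 - t) • blockPar y := by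
        rw [blockPerp, sub_smul, one_smul]; abel
      conv_lhs => rw [hy']
      simp only [← projP_mulVec, Matrix.mulVec_add, Matrix.mulVec_smul]
    rw [hdecomp]
    refine (euclNorm_add_le _ _).trans (add_le_add ?_ ?_)
    · exact (euclNorm_blockPar_le hM _).trans (euclNorm_mulVec_of_orthogonal _ horth _).le
    · rw [euclNorm_smul _ (by linarith)]
      exact mul_le_mul_of_nonneg_left hu (by linarith)
  have hnorm := euclNorm_sq_perp_add_smul_par hM y
  have hp := euclNorm_nonneg (blockPar y)
  have hq := euclNorm_nonneg (blockPerp y)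
  have hY := euclNorm_nonneg y
  have hn := fun t : ℝ => euclNorm_nonneg (blockPerp y + t • blockPar y)
  set p := euclNorm (blockPar y)
  set q := euclNorm (blockPerp y)
  have hs2 : 0 < 1 - α ^ 2 := by nlinarith
  have hs : 0 < Real.sqrt (1 - α ^ 2) := Real.sqrt_pos.mpr hs2
  have hss : Real.sqrt (1 - α ^ 2) ^ 2 = 1 - α ^ 2 := Real.sq_sqrt hs2.le
  set s := Real.sqrt (1 - α ^ 2)
  have hαq : α * q ≤ s * p := by
    refine le_of_sq_le_sq ?_ (by positivity)
    have h := pow_le_pow_left₀ (by positivity) hpar 2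
    rw [mul_pow, hpyth] at h
    rw [mul_pow, mul_pow, hss]
    linarith
  -- If `p = 0`, then `α q = 0`, so `q = s q`, and the splitting with `t = 0` suffices.
  rcases hp.eq_or_lt with hp0 | hp0
  · have hαq0 : α * q = 0 := le_antisymm (by rw [← hp0] at hαq; simpa using hαq) (by positivity)
    have hqs : q = s * q := by
      refine (pow_left_inj₀ hq (by positivity) two_ne_zero).mp ?_
      rw [mul_pow, hss]
      linear_combination (α * q) * hαq0
    have h0 := hsplit 0 zero_le_one
    have hn0 : euclNorm (blockPerp y + (0 : ℝ) • blockPar y) = q := by simp [q]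
    rw [hn0, ← hp0] at h0
    rw [← hp0]
    linarith
  · have ht1 : α * q / (s * p) ≤ 1 := (div_le_one (by positivity)).mpr hαq
    have h := hsplit (α * q / (s * p)) ht1
    have hval : euclNorm (blockPerp y + (α * q / (s * p)) • blockPar y) = q / s := by
      refine (pow_left_inj₀ (hn _) (by positivity) two_ne_zero).mp ?_
      rw [hnorm]
      field_simp
      rw [hss]
      ring
    rw [hval] at h
    refine h.trans (le_of_eq ?_)
    field_simp
    linear_combination -q * hss
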